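/- arXiv:2501.12293 — 2 statements merged into one kernel-verified Lean document; each statement's English description precedes it below -/
import Mathlib

section
/- Let G be a (c,d,α,δ)-bipartite expander with n left vertices, C₀ ⊆ F₂^d a linear code with minimum distance d₀, and T(G,C₀) the associated Tanner code. Let x ∈ F₂^n, y ∈ T(G,C₀) with Hamming distance d_H(x, y) ≤ αn, and let F = {i : x_i ≠ y_i} and U(x) = {v ∈ R : x_{N(v)} ∉ C₀}. Then c|F| ≥ |U(x)| ≥ |N_{≤ d₀−1}(F)| ≥ ((δd₀ − 1)/(d₀ − 1)) · c|F| (assuming d₀ ≥ 2). -/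
open Finset
open scoped Classical

/-- For `x ∈ F₂ⁿ`, `y ∈ T(G,C₀)` with `d_H(x,y) ≤ αn`,
`F = {i : x_i ≠ y_i}` and the set `U(x)` of unsatisfied checks,
`c|F| ≥ |U(x)| ≥ |N_{≤ d₀−1}(F)| ≥ ((δd₀ − 1)/(d₀ − 1)) · c|F|` (for `d₀ ≥ 2`). -/
theorem stmt3 (n c d d₀ : ℕ) (α δ : ℝ) (R : Type*) [Fintype R]
    (νe : R → Fin d → Fin n)
    (hinj : ∀ v : R, Function.Injective (νe v))
    (hleft : ∀ u : Fin n, (Finset.univ.filter (fun v : R => ∃ i, νe v i = u)).card = c)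
    (hexp : ∀ S : Finset (Fin n), (S.card : ℝ) ≤ α * n →
      δ * c * S.card ≤ ((Finset.univ.filter (fun v : R => ∃ u ∈ S, ∃ i, νe v i = u)).card : ℝ))
    (C₀ : Submodule (ZMod 2) (Fin d → ZMod 2))
    (hd₀min : ∀ w ∈ C₀, w ≠ 0 → d₀ ≤ hammingNorm w)
    (hd₀ex : ∃ w ∈ C₀, w ≠ 0 ∧ hammingNorm w = d₀)
    (hd₀2 : 2 ≤ d₀)
    (x y : Fin n → ZMod 2)
    (hy : ∀ v : R, (fun i => y (νe v i)) ∈ C₀)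
    (hdxy : (hammingDist x y : ℝ) ≤ α * n)
    (F : Finset (Fin n)) (hF : F = Finset.univ.filter (fun i => x i ≠ y i))
    (U : Finset R) (hU : U = Finset.univ.filter (fun v : R => (fun i => x (νe v i)) ∉ C₀))
    (Nle : Finset R) (hNle : Nle = Finset.univ.filter (fun v : R =>
      0 < (F.filter (fun u => ∃ i, νe v i = u)).card ∧
      (F.filter (fun u => ∃ i, νe v i = u)).card ≤ d₀ - 1)) :
    (U.card : ℝ) ≤ c * F.card ∧ (Nle.card : ℝ) ≤ U.card ∧
      (δ * d₀ - 1) / (d₀ - 1) * (c * F.card) ≤ (Nle.card : ℝ) := by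
  have hsum : ∑ v : R, (F.filter (fun u => ∃ i, νe v i = u)).card = c * F.card := by
    have h1 := Finset.sum_card_bipartiteAbove_eq_sum_card_bipartiteBelow
      (s := (Finset.univ : Finset R)) (t := F) (fun v u => ∃ i, νe v i = u)
    unfold Finset.bipartiteAbove Finset.bipartiteBelow at h1
    rw [h1, Finset.sum_congr rfl (fun u _ => hleft u)]
    simp [mul_comm]
  have hN : (Finset.univ.filter (fun v : R => ∃ u ∈ F, ∃ i, νe v i = u)) =
      Finset.univ.filter (fun v : R => 0 < (F.filter (fun u => ∃ i, νe v i = u)).card) := by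
    ext v
    simp only [Finset.mem_filter, Finset.mem_univ, true_and, Finset.card_pos,
      Finset.Nonempty]
  have hFc : (F.card : ℝ) ≤ α * n := by
    rw [hF]
    refine le_trans (le_of_eq ?_) hdxy
    unfold hammingDist
    congr 2
  have hE := hexp F hFc
  rw [hN] at hE
  refine ⟨?_, ?_, ?_⟩
  · have h : U.card ≤ c * F.card := by
      rw [← hsum, hU, Finset.card_filter]
      refine Finset.sum_le_sum fun v _ => ?_
      split_ifs with hv
      · exact Nat.zero_le _
      · rw [Nat.succ_le_iff, Finset.card_pos]
        by_contra hne
        apply hv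
        have : (fun i => x (νe v i)) = fun i => y (νe v i) := by
          funext i
          by_contra hxy
          apply hne
          refine ⟨νe v i, ?_⟩
          rw [Finset.mem_filter]
          refine ⟨?_, i, rfl⟩
          rw [hF]
          simpa using hxy
        rw [this]
        exact hy v
    exact_mod_cast h
  · have h : Nle ⊆ U := by
      intro v hv
      rw [hNle, Finset.mem_filter] at hv
      obtain ⟨-, hpos, hle⟩ := hv
      rw [hU, Finset.mem_filter]
      refine ⟨Finset.mem_univ _, fun hx => ?_⟩
      have hw := C₀.sub_mem hx (hy v)
      obtain ⟨u, hu⟩ := Finset.card_pos.mp hpos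
      rw [Finset.mem_filter, hF, Finset.mem_filter] at hu
      obtain ⟨⟨-, hu⟩, i, rfl⟩ := hu
      have hne : ((fun i => x (νe v i)) - fun i => y (νe v i)) ≠ 0 := by
        intro h0
        exact hu (sub_eq_zero.mp (congrFun h0 i))
      have hm := hd₀min _ hw hne
      have hc : hammingNorm ((fun i => x (νe v i)) - fun i => y (νe v i)) ≤
          (F.filter (fun u => ∃ i, νe v i = u)).card := by
        unfold hammingNorm
        refine Finset.card_le_card_of_injOn (νe v) ?_ (hinj v).injOn
        intro j hj
        have hj' : x (νe v j) - y (νe v j) ≠ 0 := by simpa using hj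
        rw [Finset.mem_coe, Finset.mem_filter, hF, Finset.mem_filter]
        exact ⟨⟨Finset.mem_univ _, sub_ne_zero.mp hj'⟩, j, rfl⟩
      omega
    exact_mod_cast Finset.card_le_card h
  · have h : d₀ * (Finset.univ.filter (fun v : R =>
        0 < (F.filter (fun u => ∃ i, νe v i = u)).card)).card ≤
        c * F.card + (d₀ - 1) * Nle.card := by
      rw [← hsum, hNle, Finset.card_filter, Finset.card_filter, Finset.mul_sum,
        Finset.mul_sum, ← Finset.sum_add_distrib]
      refine Finset.sum_le_sum fun v _ => ?_
      generalize (F.filter (fun u => ∃ i, νe v i = u)).card = k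
      split_ifs <;> omega
    have h2 : (2 : ℝ) ≤ d₀ := by exact_mod_cast hd₀2
    have h' := (Nat.cast_le (α := ℝ)).mpr h
    push_cast [Nat.cast_sub (by omega : 1 ≤ d₀)] at h'
    have h3 := mul_le_mul_of_nonneg_left hE (by linarith : (0 : ℝ) ≤ d₀)
    rw [div_mul_eq_mul_div, div_le_iff₀ (by linarith)]
    linarith
end

section
/- For fixed δ ∈ (0,1) and k > 1 with k ≤ 1/(2(1 − δ)), the Size-Expansion Function satisfies f_δ(k) = 1 − (1 − δ)k. -/
/-- A sequence `β : ℕ →₀ ℝ` (finitely supported) is feasible for the LP defining the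
Size-Expansion Function `f_δ(k)`: all `β i ≥ 0`, indexed by `i ≥ 1`,
`Σ i·β_i = k` and `Σ (1 − (1−1/k)^i)·β_i ≥ δ`. -/
def SEFeasible (δ k : ℝ) (β : ℕ →₀ ℝ) : Prop :=
  (∀ i, 0 ≤ β i) ∧ β 0 = 0 ∧
    (β.sum fun i b => (i : ℝ) * b) = k ∧
    δ ≤ (β.sum fun i b => (1 - (1 - 1 / k) ^ i) * b)

/-- The Size-Expansion Function `f_δ(k)`: the infimum of `(1/k)·Σ β_i` over
feasible sequences. -/
noncomputable def sizeExpansionFun (δ k : ℝ) : ℝ :=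
  sInf {y : ℝ | ∃ β : ℕ →₀ ℝ, SEFeasible δ k β ∧ y = (1 / k) * (β.sum fun _ b => b)}


lemma se_dual (k : ℝ) (hk : 1 < k) (n : ℕ) :
    k ^ 2 * (1 - (1 - 1 / k) ^ (n + 1)) - (k - 1) * ((n + 1 : ℕ) : ℝ) ≤ 1 := by
  have hk0 : 0 < k := by linarith
  have hx0 : 0 ≤ 1 - 1 / k := by
    rw [sub_nonneg, div_le_one hk0]; exact hk.le
  have hx1 : 1 - 1 / k ≤ 1 := by
    have : 0 < 1 / k := by positivity
    linarith
  have hkx : k * (1 - 1 / k) = k - 1 := by field_simp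
  induction n with
  | zero =>
    have : k ^ 2 * (1 - (1 - 1 / k) ^ (0 + 1)) = k := by
      rw [zero_add, pow_one]; linear_combination (-k) * hkx
    rw [this]; norm_num
  | succ n ih =>
    generalize 1 - 1 / k = x at *
    have hp : x ^ n ≤ 1 := pow_le_one₀ hx0 hx1
    have h1 : k * x * x ^ n ≤ k * x * 1 :=
      mul_le_mul_of_nonneg_left hp (by positivity)
    have e : k ^ 2 * (1 - x ^ (n + 1 + 1)) =
        k ^ 2 * (1 - x ^ (n + 1)) + k * x * x ^ n * (k - k * x) := by ring
    rw [e]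
    push_cast at ih ⊢
    have : k - k * x = 1 := by linarith
    rw [this]
    linarith

/-- For `δ ∈ (0,1)` and `1 < k ≤ 1/(2(1−δ))`,
`f_δ(k) = 1 − (1 − δ)k`. -/
theorem stmt10 (δ k : ℝ) (hδ0 : 0 < δ) (hδ1 : δ < 1) (hk : 1 < k)
    (hk2 : k ≤ 1 / (2 * (1 - δ))) :
    sizeExpansionFun δ k = 1 - (1 - δ) * k := by
  have hk0 : 0 < k := by linarith
  have hd : 0 < 1 - δ := by linarith
  have hb : 2 * (1 - δ) * k ≤ 1 := by
    rw [le_div_iff₀ (by positivity)] at hk2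
    linarith
  refine IsLeast.csInf_eq ⟨?_, ?_⟩
  · refine ⟨Finsupp.single 1 (k - 2 * ((1 - δ) * k ^ 2)) + Finsupp.single 2 ((1 - δ) * k ^ 2),
      ⟨?_, ?_, ?_, ?_⟩, ?_⟩
    · intro i
      rw [Finsupp.add_apply]
      have h1 : 0 ≤ k - 2 * ((1 - δ) * k ^ 2) := by nlinarith
      have h2 : 0 ≤ (1 - δ) * k ^ 2 := by positivity
      refine add_nonneg ?_ ?_ <;> rw [Finsupp.single_apply] <;> split_ifs <;> simp_all
    · simp
    · rw [Finsupp.sum_add_index' (by simp) (by intros; ring), Finsupp.sum_single_index (by simp),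
        Finsupp.sum_single_index (by simp)]
      push_cast; ring
    · rw [Finsupp.sum_add_index' (by simp) (by intros; ring), Finsupp.sum_single_index (by simp),
        Finsupp.sum_single_index (by simp)]
      apply le_of_eq
      field_simp
      ring
    · rw [Finsupp.sum_add_index' (by simp) (by intros; ring), Finsupp.sum_single_index (by simp),
        Finsupp.sum_single_index (by simp)]
      field_simp
      ring
  · rintro y ⟨β, ⟨h0, hz, h1, h2⟩, rfl⟩
    have key : k ^ 2 * (β.sum fun i b => (1 - (1 - 1 / k) ^ i) * b)
        - (k - 1) * (β.sum fun i b => (i : ℝ) * b) ≤ β.sum fun _ b => b := by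
      simp only [Finsupp.sum]
      rw [Finset.mul_sum, Finset.mul_sum, ← Finset.sum_sub_distrib]
      apply Finset.sum_le_sum
      intro i _
      rcases i with _ | n
      · simp [hz]
      · have := mul_le_mul_of_nonneg_right (se_dual k hk n) (h0 (n + 1))
        linarith
    rw [h1] at key
    have h3 := mul_le_mul_of_nonneg_left h2 (sq_nonneg k)
    rw [one_div, inv_mul_eq_div, le_div_iff₀ hk0]
    linarith
end
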